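/- Let n be a positive integer and let σ ∈ Sₙ ≀ S₄ be an autoparatopism of some Latin cube of order n. Then there exist β₁,β₂,β₃,β₄ ∈ Sₙ such that σ is conjugate in Sₙ ≀ S₄ to an element of one of the five forms (β₁,β₂,β₃,β₄;ε), (ε,β₂,β₃,β₄;(1 2)), (ε,ε,β₃,β₄;(1 2 3)), (ε,ε,ε,β₄;(1 2 3 4)), or (ε,ε,β₃,β₄;(1 3)(2 4)), and this conjugate element is itself an autoparatopism of some Latin cube of order n. -/

import Mathlib

/-!
Conventions.  In the paper permutations act on the right, whereas Mathlib's
`Equiv.Perm` applies on the left.  We therefore translate the paper's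
application `iδ` as `δ i` and the paper's product `αβ` ("apply `α`, then `β`")
as the Mathlib product `β * α`.  The wreath product `Sₙ ≀ S₄`, whose elements
are tuples `(α₁,α₂,α₃,α₄;δ)` with multiplication
`(α₁,…,α₄;δ)(β₁,…,β₄;ρ) = (α₁β₍₁δ₎,…,α₄β₍₄δ₎;δρ)`,
is modelled by `WreathS4` below (components indexed by `Fin 4`, so paper index
`i` is `i-1` here); the multiplication `σ * τ` of `WreathS4` is exactly the
paper's product `στ`, translated to left-acting permutations.
-/

structure WreathS4 (n : ℕ) where
  comp : Fin 4 → Equiv.Perm (Fin n)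
  base : Equiv.Perm (Fin 4)

namespace WreathS4

variable {n : ℕ}

lemma ext_of {σ τ : WreathS4 n} (h1 : σ.comp = τ.comp) (h2 : σ.base = τ.base) :
    σ = τ := by
  cases σ; cases τ; cases h1; cases h2; rfl

instance : One (WreathS4 n) := ⟨⟨fun _ => 1, 1⟩⟩
instance : Mul (WreathS4 n) :=
  ⟨fun σ τ => ⟨fun i => τ.comp (σ.base i) * σ.comp i, τ.base * σ.base⟩⟩
instance : Inv (WreathS4 n) :=
  ⟨fun σ => ⟨fun i => (σ.comp (σ.base⁻¹ i))⁻¹, σ.base⁻¹⟩⟩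

@[simp] lemma one_comp (i : Fin 4) : (1 : WreathS4 n).comp i = 1 := rfl
@[simp] lemma one_base : (1 : WreathS4 n).base = 1 := rfl
@[simp] lemma mul_comp (σ τ : WreathS4 n) (i : Fin 4) :
    (σ * τ).comp i = τ.comp (σ.base i) * σ.comp i := rfl
@[simp] lemma mul_base (σ τ : WreathS4 n) : (σ * τ).base = τ.base * σ.base := rfl
@[simp] lemma inv_comp (σ : WreathS4 n) (i : Fin 4) :
    (σ⁻¹).comp i = (σ.comp (σ.base⁻¹ i))⁻¹ := rfl
@[simp] lemma inv_base (σ : WreathS4 n) : (σ⁻¹).base = σ.base⁻¹ := rfl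

instance : Group (WreathS4 n) where
  mul_assoc a b c := ext_of (funext fun i => by simp [mul_assoc]) (mul_assoc _ _ _).symm
  one_mul a := ext_of (funext fun i => by simp) (by simp)
  mul_one a := ext_of (funext fun i => by simp) (by simp)
  inv_mul_cancel a := ext_of (funext fun i => by simp) (by simp)

end WreathS4

/-- A Latin cube of order `n`: a map `C : [n]³ → [n]` such that along each of
the `3n²` lines (fixing two coordinates) the entries form a bijection onto `[n]`. -/
def IsLatinCube {n : ℕ} (C : Fin n → Fin n → Fin n → Fin n) : Prop :=
  (∀ j k, Function.Bijective fun i => C i j k) ∧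
  (∀ i k, Function.Bijective fun j => C i j k) ∧
  (∀ i j, Function.Bijective fun k => C i j k)

/-- The orthogonal array `O(C) = {(i,j,k,C(i,j,k))}` of a cube, as a set of
quadruples `Fin 4 → Fin n`. -/
def OA {n : ℕ} (C : Fin n → Fin n → Fin n → Fin n) : Set (Fin 4 → Fin n) :=
  {x | ∃ i j k, x = ![i, j, k, C i j k]}

/-- The action of `σ = (α₁,α₂,α₃,α₄;δ)` on a quadruple: first each entry `xᵢ`
is replaced by `xᵢαᵢ`, then positions are permuted by `δ`; the image `y`
satisfies `y₍ᵢδ₎ = xᵢαᵢ`, i.e. `y j = α₍δ⁻¹ j₎ (x (δ⁻¹ j))`. -/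
def actQ {n : ℕ} (σ : WreathS4 n) (x : Fin 4 → Fin n) : Fin 4 → Fin n :=
  fun j => σ.comp (σ.base⁻¹ j) (x (σ.base⁻¹ j))

/-- `σ` is an autoparatopism of `C` when the induced action on the orthogonal
array fixes it setwise, i.e. `C^σ = C`. -/
def IsAutoparatopism {n : ℕ} (σ : WreathS4 n) (C : Fin n → Fin n → Fin n → Fin n) : Prop :=
  (actQ σ) '' OA C = OA C

/-!
The orthogonal arrays of Latin cubes are the sets of quadruples in which any three coordinates
determine the fourth.  No coordinate plays a special role in this description, so it is preserved
by the wreath product; hence a conjugate of an autoparatopism of `C` is an autoparatopism of a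
translate of `C`.

For the shape of the conjugate, first conjugate the base permutation `δ` into one of five
representatives of the conjugacy classes of `S₄`.  Conjugation by an element `(t₁,t₂,t₃,t₄;ε)`
then keeps `δ` and only changes the labels `αᵢ` of the arrows `i ↦ δ i`.  Solving for `t`
inductively along each cycle of `δ` trivialises the labels of all the arrows with `i < δ i`.
-/

/-- A set of tuples indexed by `ι` in which any choice of all coordinates but one extends uniquely
to a member: an orthogonal array of index one whose strength is one less than its number of
columns.  The value `y p` that is overwritten is irrelevant. -/
def IsLatinArray {ι α : Type*} [DecidableEq ι] (S : Set (ι → α)) : Prop :=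
  ∀ (p : ι) (y : ι → α), ∃! a, Function.update y p a ∈ S

section LatinCube

variable {n : ℕ}

lemma mem_OA {C : Fin n → Fin n → Fin n → Fin n} {x : Fin 4 → Fin n} :
    x ∈ OA C ↔ C (x 0) (x 1) (x 2) = x 3 := by
  constructor
  · rintro ⟨i, j, k, rfl⟩
    rfl
  · intro hx
    refine ⟨x 0, x 1, x 2, ?_⟩
    rw [hx]
    exact (FinVec.etaExpand_eq x).symm

lemma isLatinCube_iff_isLatinArray_OA {C : Fin n → Fin n → Fin n → Fin n} :
    IsLatinCube C ↔ IsLatinArray (OA C) := by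
  simp only [IsLatinCube, IsLatinArray, Function.bijective_iff_existsUnique, mem_OA]
  constructor
  · rintro ⟨h₀, h₁, h₂⟩ p y
    fin_cases p
    · simpa using h₀ (y 1) (y 2) (y 3)
    · simpa using h₁ (y 0) (y 2) (y 3)
    · simpa using h₂ (y 0) (y 1) (y 3)
    · simp
  · intro h
    exact ⟨fun j k b => by simpa using h 0 ![b, j, k, b],
      fun i k b => by simpa using h 1 ![i, b, k, b],
      fun i j b => by simpa using h 2 ![i, j, b, b]⟩

lemma IsLatinArray.exists_OA_eq {S : Set (Fin 4 → Fin n)} (hS : IsLatinArray S) :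
    ∃ D, IsLatinCube D ∧ OA D = S := by
  choose f f_mem f_unique using fun i j k => hS 3 ![i, j, k, i]
  have hf : OA f = S := by
    ext x
    have update_eq : Function.update ![x 0, x 1, x 2, x 0] 3 (x 3) = x := by
      ext q
      fin_cases q <;> rfl
    rw [mem_OA]
    constructor
    · intro hx
      rw [← update_eq, ← hx]
      exact f_mem _ _ _
    · intro hx
      rw [← update_eq] at hx
      exact (f_unique _ _ _ _ hx).symm
  exact ⟨f, isLatinCube_iff_isLatinArray_OA.2 (hf ▸ hS), hf⟩

end LatinCube

section Action

variable {n : ℕ}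

lemma actQ_one : actQ (1 : WreathS4 n) = id := rfl

lemma actQ_mul (σ τ : WreathS4 n) : actQ (σ * τ) = actQ τ ∘ actQ σ := by
  ext x j
  simp [actQ, mul_inv_rev]

lemma leftInverse_actQ_inv (σ : WreathS4 n) : Function.LeftInverse (actQ σ⁻¹) (actQ σ) :=
  Function.leftInverse_iff_comp.2 <| by rw [← actQ_mul, mul_inv_cancel, actQ_one]

lemma rightInverse_actQ_inv (σ : WreathS4 n) : Function.RightInverse (actQ σ⁻¹) (actQ σ) :=
  Function.rightInverse_iff_comp.2 <| by rw [← actQ_mul, inv_mul_cancel, actQ_one]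

lemma image_actQ_eq_preimage (σ : WreathS4 n) (S : Set (Fin 4 → Fin n)) :
    actQ σ '' S = actQ σ⁻¹ ⁻¹' S :=
  congrFun (Set.image_eq_preimage_of_inverse (leftInverse_actQ_inv σ)
    (rightInverse_actQ_inv σ)) S

lemma actQ_update (σ : WreathS4 n) (y : Fin 4 → Fin n) (p : Fin 4) (a : Fin n) :
    actQ σ (Function.update y p a) =
      Function.update (actQ σ y) (σ.base p) (σ.comp p a) := by
  ext j
  obtain ⟨i, rfl⟩ := σ.base.surjective j
  rcases eq_or_ne i p with rfl | hip
  · simp [actQ]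
  · simp [actQ, hip]

lemma IsLatinArray.image_actQ {S : Set (Fin 4 → Fin n)} (hS : IsLatinArray S)
    (σ : WreathS4 n) : IsLatinArray (actQ σ '' S) := by
  intro p y
  simp only [image_actQ_eq_preimage, Set.mem_preimage, actQ_update]
  exact (σ⁻¹.comp p).bijective.existsUnique_iff.1 (hS (σ⁻¹.base p) (actQ σ⁻¹ y))

lemma IsLatinCube.exists_OA_eq_image_actQ {C : Fin n → Fin n → Fin n → Fin n}
    (hC : IsLatinCube C) (σ : WreathS4 n) :
    ∃ D, IsLatinCube D ∧ OA D = actQ σ '' OA C :=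
  ((isLatinCube_iff_isLatinArray_OA.1 hC).image_actQ σ).exists_OA_eq

lemma IsAutoparatopism.conj {σ τ : WreathS4 n} {C D : Fin n → Fin n → Fin n → Fin n}
    (hσ : IsAutoparatopism σ C) (hD : OA D = actQ τ '' OA C) :
    IsAutoparatopism (τ⁻¹ * σ * τ) D := by
  unfold IsAutoparatopism at hσ ⊢
  calc actQ (τ⁻¹ * σ * τ) '' OA D
      = actQ τ '' (actQ σ '' (actQ τ⁻¹ '' (actQ τ '' OA C))) := by
        simp only [hD, actQ_mul, Set.image_comp]
    _ = actQ τ '' OA C := by rw [(leftInverse_actQ_inv τ).image_image, hσ]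
    _ = OA D := hD.symm

lemma exists_isAutoparatopism_of_isConj {σ σ' : WreathS4 n} (hconj : IsConj σ σ')
    (h : ∃ C : Fin n → Fin n → Fin n → Fin n, IsLatinCube C ∧ IsAutoparatopism σ C) :
    ∃ D : Fin n → Fin n → Fin n → Fin n, IsLatinCube D ∧ IsAutoparatopism σ' D := by
  obtain ⟨C, hC, hσ⟩ := h
  obtain ⟨c, rfl⟩ := isConj_iff.1 hconj
  obtain ⟨D, hD, hDC⟩ := hC.exists_OA_eq_image_actQ c⁻¹
  exact ⟨D, hD, by simpa only [inv_inv] using hσ.conj hDC⟩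

end Action

lemma exists_twist_eq_one_of_lt {ι G : Type*} [LT ι] [WellFoundedLT ι] [Group G]
    (δ : Equiv.Perm ι) (α : ι → G) :
    ∃ t : ι → G, ∀ i, i < δ i → t (δ i) * α i * (t i)⁻¹ = 1 := by
  classical
  let t : ι → G := WellFoundedLT.fix fun j t_lt =>
    if h : δ.symm j < j then t_lt (δ.symm j) h * (α (δ.symm j))⁻¹ else 1
  have t_rec (j : ι) (hj : δ.symm j < j) : t j = t (δ.symm j) * (α (δ.symm j))⁻¹ :=
    (WellFoundedLT.fix_eq _ j).trans (dif_pos hj)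
  refine ⟨t, fun i hi => ?_⟩
  rw [t_rec (δ i) (by rwa [δ.symm_apply_apply]), δ.symm_apply_apply]
  simp

namespace WreathS4

variable {n : ℕ}

lemma exists_isConj_base_eq (σ : WreathS4 n) {δ : Equiv.Perm (Fin 4)}
    (h : IsConj σ.base δ) : ∃ σ', IsConj σ σ' ∧ σ'.base = δ := by
  obtain ⟨ρ, rfl⟩ := isConj_iff.1 h
  let c : WreathS4 n := ⟨1, ρ⁻¹⟩
  exact ⟨c * σ * c⁻¹, isConj_iff.2 ⟨c, rfl⟩, by simp [c, mul_assoc]⟩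

lemma isConj_mk_twist (σ : WreathS4 n) (t : Fin 4 → Equiv.Perm (Fin n)) :
    IsConj σ ⟨fun i => t (σ.base i) * σ.comp i * (t i)⁻¹, σ.base⟩ := by
  refine isConj_iff.2 ⟨(⟨t, 1⟩ : WreathS4 n)⁻¹, ext_of (funext fun i => ?_) ?_⟩
  · simp [mul_assoc]
  · simp

lemma exists_isConj_comp_eq_one_of_lt (σ : WreathS4 n) :
    ∃ β : Fin 4 → Equiv.Perm (Fin n),
      IsConj σ ⟨β, σ.base⟩ ∧ ∀ i, i < σ.base i → β i = 1 := by
  obtain ⟨t, ht⟩ := exists_twist_eq_one_of_lt σ.base σ.comp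
  exact ⟨_, isConj_mk_twist σ t, ht⟩

end WreathS4

/-- One representative of each conjugacy class of `S₄`, written as in the five normal forms:
`ε`, `(1 2)`, `(1 2 3)`, `(1 2 3 4)` and `(1 3)(2 4)` on the points `0, 1, 2, 3`.
The points are arranged so that along each cycle all arrows `i ↦ δ i` but one are increasing. -/
def conjClassReps : Finset (Equiv.Perm (Fin 4)) :=
  {1, Equiv.swap 0 1, Equiv.swap 0 2 * Equiv.swap 0 1,
    Equiv.swap 0 3 * Equiv.swap 0 2 * Equiv.swap 0 1, Equiv.swap 0 2 * Equiv.swap 1 3}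

lemma exists_mem_conjClassReps_isConj :
    ∀ δ : Equiv.Perm (Fin 4), ∃ δ' ∈ conjClassReps, IsConj δ δ' := by
  decide +kernel

lemma WreathS4.mk_eq_normal_form {n : ℕ} {β : Fin 4 → Equiv.Perm (Fin n)}
    {δ : Equiv.Perm (Fin 4)} (hδ : δ ∈ conjClassReps) (hβ : ∀ i, i < δ i → β i = 1) :
    mk β δ = mk ![β 0, β 1, β 2, β 3] 1 ∨
    mk β δ = mk ![1, β 1, β 2, β 3] (Equiv.swap 0 1) ∨
    mk β δ = mk ![1, 1, β 2, β 3] (Equiv.swap 0 2 * Equiv.swap 0 1) ∨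
    mk β δ = mk ![1, 1, 1, β 3] (Equiv.swap 0 3 * Equiv.swap 0 2 * Equiv.swap 0 1) ∨
    mk β δ = mk ![1, 1, β 2, β 3] (Equiv.swap 0 2 * Equiv.swap 1 3) := by
  have eta : β = ![β 0, β 1, β 2, β 3] := (FinVec.etaExpand_eq β).symm
  simp only [conjClassReps, Finset.mem_insert, Finset.mem_singleton] at hδ
  rcases hδ with rfl | rfl | rfl | rfl | rfl
  · exact .inl (congrArg (mk · _) eta)
  · have h₀ : β 0 = 1 := hβ 0 (by decide)
    exact .inr <| .inl <| congrArg (mk · _) (by rwa [h₀] at eta)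
  · have h₀ : β 0 = 1 := hβ 0 (by decide)
    have h₁ : β 1 = 1 := hβ 1 (by decide)
    exact .inr <| .inr <| .inl <| congrArg (mk · _) (by rwa [h₀, h₁] at eta)
  · have h₀ : β 0 = 1 := hβ 0 (by decide)
    have h₁ : β 1 = 1 := hβ 1 (by decide)
    have h₂ : β 2 = 1 := hβ 2 (by decide)
    exact .inr <| .inr <| .inr <| .inl <| congrArg (mk · _) (by rwa [h₀, h₁, h₂] at eta)
  · have h₀ : β 0 = 1 := hβ 0 (by decide)
    have h₁ : β 1 = 1 := hβ 1 (by decide)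
    exact .inr <| .inr <| .inr <| .inr <| congrArg (mk · _) (by rwa [h₀, h₁] at eta)

/-- Every autoparatopism `σ` of a Latin cube of order `n` is conjugate in
`Sₙ ≀ S₄` to an element `σ'` of one of the five normal forms
`(β₁,β₂,β₃,β₄;ε)`, `(ε,β₂,β₃,β₄;(1 2))`, `(ε,ε,β₃,β₄;(1 2 3))`,
`(ε,ε,ε,β₄;(1 2 3 4))`, `(ε,ε,β₃,β₄;(1 3)(2 4))` (0-indexed as below), and
`σ'` is itself an autoparatopism of some Latin cube of order `n`. -/
theorem autoparatopism_normal_form (n : ℕ) (hn : 0 < n) (σ : WreathS4 n)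
    (h : ∃ C : Fin n → Fin n → Fin n → Fin n, IsLatinCube C ∧ IsAutoparatopism σ C) :
    ∃ (β₁ β₂ β₃ β₄ : Equiv.Perm (Fin n)) (σ' : WreathS4 n),
      (σ' = WreathS4.mk ![β₁, β₂, β₃, β₄] 1 ∨
       σ' = WreathS4.mk ![1, β₂, β₃, β₄] (Equiv.swap 0 1) ∨
       σ' = WreathS4.mk ![1, 1, β₃, β₄] (Equiv.swap 0 2 * Equiv.swap 0 1) ∨
       σ' = WreathS4.mk ![1, 1, 1, β₄] (Equiv.swap 0 3 * Equiv.swap 0 2 * Equiv.swap 0 1) ∨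
       σ' = WreathS4.mk ![1, 1, β₃, β₄] (Equiv.swap 0 2 * Equiv.swap 1 3)) ∧
      IsConj σ σ' ∧
      ∃ D : Fin n → Fin n → Fin n → Fin n, IsLatinCube D ∧ IsAutoparatopism σ' D := by
  obtain ⟨δ, hδ, hbase⟩ := exists_mem_conjClassReps_isConj σ.base
  obtain ⟨τ, hστ, rfl⟩ := σ.exists_isConj_base_eq hbase
  obtain ⟨β, hτ, hβ⟩ := τ.exists_isConj_comp_eq_one_of_lt
  have hconj : IsConj σ ⟨β, τ.base⟩ := hστ.trans hτ
  exact ⟨β 0, β 1, β 2, β 3, ⟨β, τ.base⟩, WreathS4.mk_eq_normal_form hδ hβ, hconj,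
    exists_isAutoparatopism_of_isConj hconj h⟩
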